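/- Let S be a finite set, let R ⊆ S × S be a symmetric relation with R nonempty, and write R_A = {B ∈ S : (A,B) ∈ R}; assume R_A is nonempty for every A ∈ S. Let P be a finite set, let Λ: S → (subsets of P) with Λ(A) nonempty for every A, and for each A ∈ S let β^A: P → ℝ≥0 satisfy Σ_{p ∈ Λ(A)} (β^A_p)² ≤ 1. Then (1/|R|)·Σ_{(A,B)∈R} Σ_{p ∈ Λ(A) ∩ Λ(B)} β^A_p·β^B_p ≤ max_{A ∈ S, p ∈ Λ(A)} ( |{B ∈ R_A : p ∈ Λ(B)}| / |R_A| ). -/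

import Mathlib

open scoped BigOperators

/-- Over a symmetric relation, the sum of the overlaps `Σ_{p ∈ Λ A ∩ Λ B} β^A_p·β^B_p` is at most
the sum of the squares `Σ_{p ∈ Λ A ∩ Λ B} (β^A_p)²`. -/
theorem sum_overlap_le_sum_sq {S P : Type*} [DecidableEq P]
    (R : Finset (S × S)) (hsym : ∀ q ∈ R, (q.2, q.1) ∈ R) (Λ : S → Finset P) (β : S → P → ℝ) :
    ∑ q ∈ R, ∑ p ∈ Λ q.1 ∩ Λ q.2, β q.1 p * β q.2 p ≤
      ∑ q ∈ R, ∑ p ∈ Λ q.1 ∩ Λ q.2, β q.1 p ^ 2 := by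
  have hswap : ∑ q ∈ R, ∑ p ∈ Λ q.1 ∩ Λ q.2, β q.2 p ^ 2 =
      ∑ q ∈ R, ∑ p ∈ Λ q.1 ∩ Λ q.2, β q.1 p ^ 2 :=
    Finset.sum_nbij' Prod.swap Prod.swap hsym hsym (fun _ _ => rfl) (fun _ _ => rfl)
      fun q _ => by simp [Finset.inter_comm]
  have hamgm : ∑ q ∈ R, ∑ p ∈ Λ q.1 ∩ Λ q.2, 2 * (β q.1 p * β q.2 p) ≤
      ∑ q ∈ R, ∑ p ∈ Λ q.1 ∩ Λ q.2, (β q.1 p ^ 2 + β q.2 p ^ 2) := by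
    gcongr with q _ p _
    linarith [two_mul_le_add_sq (β q.1 p) (β q.2 p)]
  simp only [Finset.sum_add_distrib, ← Finset.mul_sum] at hamgm
  linarith

/-- If each `p ∈ a` lies in at most `c * |s|` of the sets `t B`, `B ∈ s`, then the total weight
of the intersections `a ∩ t B` is at most `c * |s|` times the weight of `a`. -/
theorem sum_sum_inter_le {S P : Type*} [DecidableEq P] (s : Finset S) (a : Finset P)
    (t : S → Finset P) (w : P → ℝ) (hw : ∀ p ∈ a, 0 ≤ w p) (c : ℝ)
    (hc : ∀ p ∈ a, ((s.filter fun B => p ∈ t B).card : ℝ) ≤ c * s.card) :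
    ∑ B ∈ s, ∑ p ∈ a ∩ t B, w p ≤ c * s.card * ∑ p ∈ a, w p := by
  calc ∑ B ∈ s, ∑ p ∈ a ∩ t B, w p
      = ∑ p ∈ a, ((s.filter fun B => p ∈ t B).card : ℝ) * w p := by
        simp_rw [← Finset.filter_mem_eq_inter, Finset.sum_filter]
        rw [Finset.sum_comm]
        simp [← Finset.sum_filter]
    _ ≤ ∑ p ∈ a, c * s.card * w p :=
        Finset.sum_le_sum fun p hp => mul_le_mul_of_nonneg_right (hc p hp) (hw p hp)
    _ = c * s.card * ∑ p ∈ a, w p := by rw [Finset.mul_sum]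

/-- Let `S` be a finite set, `R ⊆ S × S` a nonempty symmetric relation
with each `R_A = {B : (A,B) ∈ R}` nonempty, `Λ : S → Finset P` with each `Λ A` nonempty,
and `β^A : P → ℝ≥0` with `Σ_{p ∈ Λ A} (β^A_p)² ≤ 1` for each `A`. Then the average over
`(A,B) ∈ R` of `Σ_{p ∈ Λ A ∩ Λ B} β^A_p·β^B_p` is at most
`max_{A ∈ S, p ∈ Λ A} |{B ∈ R_A : p ∈ Λ B}| / |R_A|`. -/
theorem average_overlap_le_max_fraction {S P : Type*} [Fintype S] [DecidableEq S]
    [Fintype P] [DecidableEq P]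
    (R : Finset (S × S)) (hsym : ∀ p ∈ R, (p.2, p.1) ∈ R) (hR : R.Nonempty)
    (hRA : ∀ A : S, (Finset.univ.filter fun B => (A, B) ∈ R).Nonempty)
    (Λ : S → Finset P) (hΛ : ∀ A, (Λ A).Nonempty)
    (β : S → P → ℝ) (hβ0 : ∀ A p, 0 ≤ β A p)
    (hβ1 : ∀ A, ∑ p ∈ Λ A, β A p ^ 2 ≤ 1) :
    (∑ q ∈ R, ∑ p ∈ Λ q.1 ∩ Λ q.2, β q.1 p * β q.2 p) / (R.card : ℝ) ≤
      sSup {x : ℝ | ∃ A : S, ∃ p ∈ Λ A,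
        x = (((Finset.univ.filter fun B => (A, B) ∈ R).filter fun B => p ∈ Λ B).card : ℝ) /
          (((Finset.univ.filter fun B => (A, B) ∈ R).card : ℝ))} := by
  set M : ℝ := sSup _
  have hfrac : ∀ A, ∀ p ∈ Λ A,
      (((Finset.univ.filter fun B => (A, B) ∈ R).filter fun B => p ∈ Λ B).card : ℝ) ≤
        M * (Finset.univ.filter fun B => (A, B) ∈ R).card := by
    intro A p hp
    rw [← div_le_iff₀ (by exact_mod_cast (hRA A).card_pos)]
    refine le_csSup ⟨1, ?_⟩ ⟨A, p, hp, rfl⟩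
    rintro x ⟨A, p, -, rfl⟩
    exact div_le_one_of_le₀ (by exact_mod_cast Finset.card_filter_le _ _) (Nat.cast_nonneg _)
  have hM0 : 0 ≤ M := by
    refine Real.sSup_nonneg ?_
    rintro x ⟨A, p, -, rfl⟩
    positivity
  have hfiber (f : S × S → ℝ) :
      ∑ q ∈ R, f q = ∑ A, ∑ B ∈ Finset.univ.filter fun B => (A, B) ∈ R, f (A, B) :=
    Finset.sum_finset_product R _ _ (by simp)
  have hcard : (R.card : ℝ) = ∑ A, ((Finset.univ.filter fun B => (A, B) ∈ R).card : ℝ) := by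
    simpa using hfiber fun _ => 1
  rw [div_le_iff₀ (by exact_mod_cast hR.card_pos)]
  refine (sum_overlap_le_sum_sq R hsym Λ β).trans ?_
  rw [hfiber, hcard, Finset.mul_sum]
  refine Finset.sum_le_sum fun A _ => ?_
  exact (sum_sum_inter_le _ (Λ A) Λ (fun p => β A p ^ 2) (fun p _ => sq_nonneg _) M
    (hfrac A)).trans (mul_le_of_le_one_right (by positivity) (hβ1 A))
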